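/- Fix y in the Weyl group W and a reduced expression y = s_{i_1}⋯s_{i_l}; for 1 ≤ j ≤ l set β_j := s_{i_1}⋯s_{i_{j−1}}(α_{i_j}) (an element of Φ⁺). Then for every w ∈ W, the element Σ ħ^{l−k}·β_{j_1}β_{j_2}⋯β_{j_k} of the polynomial algebra Sym(V)[ħ], where the sum is over all sequences 1 ≤ j_1 < j_2 < ⋯ < j_k ≤ l with s_{i_{j_1}} s_{i_{j_2}} ⋯ s_{i_{j_k}} = w and the roots β_j are regarded as degree-one elements of Sym(V), does not depend on the choice of reduced expression for y. -/

import Mathlib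

/-
STATEMENT 0: Fix y ∈ W and a reduced expression y = s_{i_1}⋯s_{i_l}; set
β_j := s_{i_1}⋯s_{i_{j−1}}(α_{i_j}) ∈ Φ⁺.  Then for every w ∈ W the element
Σ ħ^{l−k}·β_{j_1}⋯β_{j_k} of Sym(V)[ħ] — the sum over all 1 ≤ j_1 < ⋯ < j_k ≤ l with
s_{i_{j_1}}⋯s_{i_{j_k}} = w, the roots β_j regarded as degree-one elements of Sym(V) —
does not depend on the choice of reduced expression for y.

Since this version of Mathlib has no symmetric algebra, we use the universal property of
Sym(V)[ħ]: an element of Sym(V)[ħ] is determined by (and determines) its image under every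
ℝ-algebra map to a commutative ℝ-algebra A, i.e. under every choice of an ℝ-linear map
ι : V →ₗ[ℝ] A (extending to Sym(V)) together with an element ħ ∈ A.  The statement below is
therefore quantified over all such (A, ι, ħ), which is equivalent to the identity in Sym(V)[ħ].
-/

open scoped Classical

set_option maxHeartbeats 1000000
set_option synthInstance.maxHeartbeats 400000

noncomputable section

variable {n : ℕ} {W : Type*} [Group W] {M : CoxeterMatrix (Fin n)} (cs : CoxeterSystem M W)
variable {V : Type*} [AddCommGroup V] [Module ℝ V]

/-- For a word `ω = [i_1, …, i_l]` and a position `j` (0-indexed), the root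
`β_{j+1} = s_{i_1}⋯s_{i_j}(α_{i_{j+1}})`. -/
def betaRoot (σ : W →* (V ≃ₗ[ℝ] V)) (α : Fin n → V) (ω : List (Fin n)) (j : Fin ω.length) : V :=
  σ (cs.wordProd (ω.take j.val)) (α (ω.get j))

/-- The sum `Σ ħ^{l−k}·β_{j_1}⋯β_{j_k}` over all subsequences `j_1 < ⋯ < j_k` of positions
of the word `ω` such that `s_{i_{j_1}}⋯s_{i_{j_k}} = w`. -/
def billeyHbarSum (σ : W →* (V ≃ₗ[ℝ] V)) (α : Fin n → V)
    (A : Type*) [CommRing A] [Algebra ℝ A] (ι : V →ₗ[ℝ] A) (hbar : A)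
    (ω : List (Fin n)) (w : W) : A :=
  ∑ s : Finset (Fin ω.length),
    if cs.wordProd ((s.sort (· ≤ ·)).map ω.get) = w then
      hbar ^ (ω.length - s.card) * ∏ j ∈ s, ι (betaRoot cs σ α ω j)
    else 0

/-!
The sums attached to a word `i_1 ⋯ i_l` are the coefficients of the product
`(ħ + β_1 s_{i_1}) ⋯ (ħ + β_l s_{i_l})`. Splitting off the first factor, one finds by induction on
the word that the vector `F` of these coefficients satisfies
`x_w F(w) - ħ ∑_t ⟨x, γ_t^∨⟩ F(w t) = x_y F(w)` for every `x ∈ V`, where `x_w = w x` and `t` runs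
over the reflections, along positive roots `γ_t`, for which `w γ_t` is positive: it is an
eigenvector of `V` acting on the principal series of the graded Hecke algebra. Since `w t` is then
longer than `w`, these equations are triangular with respect to the length, so over a domain
containing `V` they determine `F` up to its value at `y`. That value is the product of the
inversions of `y`, whatever the reduced word. Other coefficient rings are reached from `Sym(V)[ħ]`
by specialization.
-/

/-! ### The recursion on words -/

theorem sum_finset_fin_succ {N : Type*} [AddCommMonoid N] {m : ℕ}
    (f : Finset (Fin (m + 1)) → N) :
    ∑ s, f s = ∑ s : Finset (Fin m), f (s.map (Fin.succEmb m)) +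
      ∑ s : Finset (Fin m), f (insert 0 (s.map (Fin.succEmb m))) := by
  have hpowerset : (Finset.univ.map (Fin.succEmb m)).powerset =
      Finset.univ.map ⟨_, Finset.map_injective (Fin.succEmb m)⟩ := by
    ext s
    simp [Finset.subset_map_iff, eq_comm]
  have huniv : Finset.univ = insert 0 (Finset.univ.map (Fin.succEmb m)) := by
    rw [Fin.univ_succ, Finset.cons_eq_insert]
    rfl
  rw [← Finset.powerset_univ, huniv, Finset.sum_powerset_insert (by simp), hpowerset]
  simp

section Recursion

variable {A : Type*} [CommRing A]

/-- The coefficient of `w` in the product of the elements `hbar + β j • s_{g j}` of the group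
algebra of `W`, expanded over the subwords of the word `g`. -/
def subwordSum (hbar : A) {m : ℕ} (g : Fin m → Fin n) (β : Fin m → A) (w : W) : A :=
  ∑ s : Finset (Fin m),
    if cs.wordProd ((s.sort (· ≤ ·)).map g) = w then hbar ^ (m - s.card) * ∏ j ∈ s, β j else 0

theorem subwordSum_zero (hbar : A) (g : Fin 0 → Fin n) (β : Fin 0 → A) (w : W) :
    subwordSum cs hbar g β w = if w = 1 then 1 else 0 := by
  simp [subwordSum, Finset.eq_empty_of_isEmpty, eq_comm]

theorem subwordSum_succ (hbar : A) {m : ℕ} (g : Fin (m + 1) → Fin n) (β : Fin (m + 1) → A)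
    (w : W) :
    subwordSum cs hbar g β w =
      hbar * subwordSum cs hbar (g ∘ Fin.succ) (β ∘ Fin.succ) w +
        β 0 * subwordSum cs hbar (g ∘ Fin.succ) (β ∘ Fin.succ) (cs.simple (g 0) * w) := by
  have hsort (s : Finset (Fin m)) :
      ((s.map (Fin.succEmb m)).sort (· ≤ ·)).map g = (s.sort (· ≤ ·)).map (g ∘ Fin.succ) := by
    rw [← Finset.map_sort (r := (· ≤ ·)) _ _ _ (by simp), List.map_map]
    rfl
  have hzero (s : Finset (Fin m)) : 0 ∉ s.map (Fin.succEmb m) := by simp [Fin.succ_ne_zero]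
  unfold subwordSum
  rw [sum_finset_fin_succ, Finset.mul_sum, Finset.mul_sum]
  congr 1 <;> refine Finset.sum_congr rfl fun s _ => ?_
  · have hcard : s.card ≤ m := by simpa using s.card_le_univ
    rw [hsort, Finset.card_map, Finset.prod_map, Nat.succ_sub hcard, pow_succ', mul_assoc,
      mul_ite, mul_zero]
    rfl
  · have hprod : cs.wordProd (g 0 :: (s.sort (· ≤ ·)).map (g ∘ Fin.succ)) = w ↔
        cs.wordProd ((s.sort (· ≤ ·)).map (g ∘ Fin.succ)) = cs.simple (g 0) * w := by
      rw [cs.wordProd_cons, ← mul_right_inj (cs.simple (g 0)), cs.simple_mul_simple_cancel_left]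
    rw [Finset.sort_insert _ (by simp) (hzero s), List.map_cons, hsort,
      Finset.card_insert_of_notMem (hzero s), Finset.card_map, Finset.prod_insert (hzero s),
      Finset.prod_map, Nat.succ_sub_succ, mul_ite, mul_zero]
    exact if_congr hprod (mul_left_comm _ _ _) rfl

variable [Algebra ℝ A] (σ : W →* (V ≃ₗ[ℝ] V)) (α : Fin n → V) (ι : V →ₗ[ℝ] A) (hbar : A)

theorem billeyHbarSum_nil (w : W) :
    billeyHbarSum cs σ α A ι hbar [] w = if w = 1 then 1 else 0 :=
  subwordSum_zero cs hbar _ _ w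

theorem billeyHbarSum_cons (i : Fin n) (ω : List (Fin n)) (w : W) :
    billeyHbarSum cs σ α A ι hbar (i :: ω) w =
      hbar * billeyHbarSum cs σ α A (ι ∘ₗ (σ (cs.simple i)).toLinearMap) hbar ω w +
        ι (α i) * billeyHbarSum cs σ α A (ι ∘ₗ (σ (cs.simple i)).toLinearMap) hbar ω
          (cs.simple i * w) := by
  let β : Fin (ω.length + 1) → A := fun j => ι (betaRoot cs σ α (i :: ω) j)
  have hβ_zero : β 0 = ι (α i) := by simp [β, betaRoot]
  have hβ_succ : β ∘ Fin.succ =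
      fun j => (ι ∘ₗ (σ (cs.simple i)).toLinearMap) (betaRoot cs σ α ω j) := by
    ext j
    simp [β, betaRoot, cs.wordProd_cons, map_mul]
  have key := subwordSum_succ cs hbar (m := ω.length) (i :: ω).get β w
  rw [hβ_zero, hβ_succ] at key
  exact key

theorem map_billeyHbarSum {B : Type*} [CommRing B] [Algebra ℝ B] (f : A →ₐ[ℝ] B)
    (ω : List (Fin n)) (w : W) :
    f (billeyHbarSum cs σ α A ι hbar ω w) =
      billeyHbarSum cs σ α B (f.toLinearMap ∘ₗ ι) (f hbar) ω w := by
  simp [billeyHbarSum, apply_ite f]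

theorem billeyHbarSum_eq_zero_of_length_lt {ω : List (Fin n)} {w : W}
    (hw : ω.length < cs.length w) : billeyHbarSum cs σ α A ι hbar ω w = 0 := by
  refine Finset.sum_eq_zero fun s _ => if_neg ?_
  rintro rfl
  have hlength := cs.length_wordProd_le ((s.sort (· ≤ ·)).map ω.get)
  have hcard : s.card ≤ ω.length := by simpa using s.card_le_univ
  rw [List.length_map, Finset.length_sort] at hlength
  omega

end Recursion

/-! ### Positive systems and their reflections -/

/-- The simple and positive roots of a finite root system, not necessarily crystallographic, whose
Weyl group is `W`: `σ` is the reflection representation, `Φp` the set of positive roots, and `α i`,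
`αv i` are the simple roots and coroots. -/
structure IsPositiveSystem (σ : W →* (V ≃ₗ[ℝ] V)) (Φp : Finset V) (α : Fin n → V)
    (αv : Fin n → (V →ₗ[ℝ] ℝ)) : Prop where
  faithful : Function.Injective σ
  simple_mem : ∀ i, α i ∈ Φp
  span_eq_top : Submodule.span ℝ (Φp : Set V) = ⊤
  apply_simple : ∀ (i : Fin n) (v : V), σ (cs.simple i) v = v - αv i v • α i
  coroot_root : ∀ i, αv i (α i) = 2
  simple_apply_mem : ∀ i, ∀ b ∈ Φp, b ≠ α i → σ (cs.simple i) b ∈ Φp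
  neg_notMem : ∀ b ∈ Φp, -b ∉ Φp

/-- An element of `W` acting as a reflection along a positive root, together with that root and
its coroot. Positive roots along which `W` has no reflection are thereby left out. -/
@[ext]
structure PositiveReflection (σ : W →* (V ≃ₗ[ℝ] V)) (Φp : Finset V) where
  reflection : W
  root : V
  coroot : V →ₗ[ℝ] ℝ
  root_mem : root ∈ Φp
  coroot_root : coroot root = 2
  apply_reflection : ∀ v, σ reflection v = v - coroot v • root

/-- The left inversions of `y`: the positive roots that `y⁻¹` makes negative. -/
def leftInversions (σ : W →* (V ≃ₗ[ℝ] V)) (Φp : Finset V) (y : W) : Finset V :=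
  {b ∈ Φp | -σ y⁻¹ b ∈ Φp}

theorem PositiveReflection.apply_root {σ : W →* (V ≃ₗ[ℝ] V)} {Φp : Finset V}
    (r : PositiveReflection σ Φp) : σ r.reflection r.root = -r.root := by
  rw [r.apply_reflection, r.coroot_root, two_smul]
  abel

namespace IsPositiveSystem

variable {cs} {σ : W →* (V ≃ₗ[ℝ] V)} {Φp : Finset V} {α : Fin n → V} {αv : Fin n → (V →ₗ[ℝ] ℝ)}

theorem simple_apply_root (h : IsPositiveSystem cs σ Φp α αv) (i : Fin n) :
    σ (cs.simple i) (α i) = -α i := by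
  rw [h.apply_simple, h.coroot_root, two_smul]
  abel

theorem coroot_simple_apply (h : IsPositiveSystem cs σ Φp α αv) (i : Fin n) (v : V) :
    αv i (σ (cs.simple i) v) = -αv i v := by
  rw [h.apply_simple, map_sub, map_smul, h.coroot_root, smul_eq_mul]
  ring

theorem simple_apply_simple_apply (h : IsPositiveSystem cs σ Φp α αv) (i : Fin n) (v : V) :
    σ (cs.simple i) (σ (cs.simple i) v) = v := by
  rw [h.apply_simple, h.coroot_simple_apply, h.apply_simple]
  module

theorem apply_mem_or_neg_apply_mem (h : IsPositiveSystem cs σ Φp α αv) (w : W) {b : V}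
    (hb : b ∈ Φp) : σ w b ∈ Φp ∨ -σ w b ∈ Φp := by
  have hsimple (i : Fin n) {c : V} (hc : c ∈ Φp) :
      σ (cs.simple i) c ∈ Φp ∨ -σ (cs.simple i) c ∈ Φp := by
    by_cases hα : c = α i
    · right
      rwa [hα, h.simple_apply_root, neg_neg, ← hα]
    · exact Or.inl (h.simple_apply_mem i c hc hα)
  induction w using cs.simple_induction_left with
  | one => simp [hb]
  | mul_simple_left w i ih =>
    rw [map_mul, LinearEquiv.mul_apply]
    rcases ih with ih | ih
    · exact hsimple i ih
    · simpa [or_comm] using hsimple i ih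

theorem eq_simple_of_neg_simple_apply_mem (h : IsPositiveSystem cs σ Φp α αv) {i : Fin n} {b : V}
    (hb : b ∈ Φp) (hneg : -σ (cs.simple i) b ∈ Φp) : b = α i := by
  by_contra hne
  exact h.neg_notMem _ (h.simple_apply_mem i b hb hne) hneg

theorem root_injective (h : IsPositiveSystem cs σ Φp α αv) :
    Function.Injective (PositiveReflection.root : PositiveReflection σ Φp → V) := by
  let Φ : Set V := {b | b ∈ Φp ∨ -b ∈ Φp}
  have hfinite : Φ.Finite :=
    Φp.finite_toSet.union (Φp.finite_toSet.preimage neg_injective.injOn)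
  have hspan : Submodule.span ℝ Φ = ⊤ :=
    top_unique (h.span_eq_top ▸ Submodule.span_mono fun _ => Or.inl)
  have hmaps (r : PositiveReflection σ Φp) :
      Set.MapsTo (Module.preReflection r.root r.coroot) Φ Φ := by
    intro b hb
    rw [Module.preReflection_apply, ← r.apply_reflection]
    rcases hb with hb | hb
    · exact h.apply_mem_or_neg_apply_mem _ hb
    · simpa [Φ, or_comm] using h.apply_mem_or_neg_apply_mem r.reflection hb
  intro r r' hroot
  have hcoroot : r.coroot = r'.coroot :=
    Module.Dual.eq_of_preReflection_mapsTo hfinite hspan r.coroot_root (hmaps r)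
      (hroot ▸ r'.coroot_root) (hroot ▸ hmaps r')
  refine PositiveReflection.ext (h.faithful (LinearEquiv.ext fun v => ?_)) hroot hcoroot
  rw [r.apply_reflection, r'.apply_reflection, hroot, hcoroot]

theorem finite_positiveReflection (h : IsPositiveSystem cs σ Φp α αv) :
    Finite (PositiveReflection σ Φp) :=
  Finite.of_injective (fun r => (⟨r.root, r.root_mem⟩ : Φp)) fun _ _ hr =>
    h.root_injective (congrArg Subtype.val hr)

/-- The reflection `w⁻¹ s_i w` along `w⁻¹ α_i`, when this root is positive. -/
@[simps]
def conjSimple (h : IsPositiveSystem cs σ Φp α αv) {w : W} {i : Fin n}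
    (hpos : σ w⁻¹ (α i) ∈ Φp) : PositiveReflection σ Φp where
  reflection := w⁻¹ * cs.simple i * w
  root := σ w⁻¹ (α i)
  coroot := αv i ∘ₗ (σ w).toLinearMap
  root_mem := hpos
  coroot_root := by simp [h.coroot_root]
  apply_reflection v := by simp [map_mul, h.apply_simple]

theorem eq_conjSimple_iff (h : IsPositiveSystem cs σ Φp α αv) {w : W} {i : Fin n}
    (hpos : σ w⁻¹ (α i) ∈ Φp) (r : PositiveReflection σ Φp) :
    r = h.conjSimple hpos ↔ σ w r.root = α i := by
  rw [← h.root_injective.eq_iff, conjSimple_root, map_inv]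
  exact LinearEquiv.eq_symm_apply (σ w)

theorem filter_apply_root_mem_eq_insert (h : IsPositiveSystem cs σ Φp α αv)
    [Fintype (PositiveReflection σ Φp)] {w : W} {i : Fin n} (hpos : σ w⁻¹ (α i) ∈ Φp) :
    ({r | σ w r.root ∈ Φp} : Finset (PositiveReflection σ Φp)) =
      insert (h.conjSimple hpos) ({r | σ (cs.simple i * w) r.root ∈ Φp} : Finset _) := by
  ext r
  simp only [Finset.mem_insert, Finset.mem_filter_univ, h.eq_conjSimple_iff, map_mul,
    LinearEquiv.mul_apply]
  constructor
  · intro hr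
    exact or_iff_not_imp_left.mpr (h.simple_apply_mem i _ hr)
  · rintro (hr | hr)
    · exact hr ▸ h.simple_mem i
    · refine (h.apply_mem_or_neg_apply_mem w r.root_mem).resolve_right fun hneg => ?_
      have hroot := h.eq_simple_of_neg_simple_apply_mem hneg (by simpa using hr)
      refine h.neg_notMem _ hpos ?_
      rw [← hroot]
      simpa using r.root_mem

theorem conjSimple_notMem_filter (h : IsPositiveSystem cs σ Φp α αv)
    [Fintype (PositiveReflection σ Φp)] {w : W} {i : Fin n} (hpos : σ w⁻¹ (α i) ∈ Φp) :
    h.conjSimple hpos ∉ ({r | σ (cs.simple i * w) r.root ∈ Φp} : Finset _) := by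
  simp [h.simple_apply_root, h.neg_notMem _ (h.simple_mem i)]

theorem length_wordProd_mul_reflection_lt (h : IsPositiveSystem cs σ Φp α αv) (ω : List (Fin n))
    (r : PositiveReflection σ Φp) (hneg : -σ (cs.wordProd ω) r.root ∈ Φp) :
    cs.length (cs.wordProd ω * r.reflection) < ω.length := by
  induction ω with
  | nil => exact absurd (by simpa using hneg) (h.neg_notMem _ r.root_mem)
  | cons i ω ih =>
    rw [cs.wordProd_cons, mul_assoc, List.length_cons]
    by_cases hω : -σ (cs.wordProd ω) r.root ∈ Φp
    · have hle := cs.length_mul_le (cs.simple i) (cs.wordProd ω * r.reflection)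
      rw [cs.length_simple] at hle
      have := ih hω
      omega
    · rw [cs.wordProd_cons, map_mul, LinearEquiv.mul_apply] at hneg
      have hroot : σ (cs.wordProd ω) r.root = α i :=
        h.eq_simple_of_neg_simple_apply_mem
          ((h.apply_mem_or_neg_apply_mem _ r.root_mem).resolve_right hω) hneg
      have hpos : σ (cs.wordProd ω)⁻¹ (α i) ∈ Φp := by simpa [← hroot] using r.root_mem
      rw [(h.eq_conjSimple_iff hpos r).mpr hroot, conjSimple_reflection, mul_assoc,
        mul_inv_cancel_left, cs.simple_mul_simple_cancel_left]
      exact Nat.lt_succ_of_le (cs.length_wordProd_le ω)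

theorem length_mul_reflection_lt (h : IsPositiveSystem cs σ Φp α αv) {w : W}
    (r : PositiveReflection σ Φp) (hneg : -σ w r.root ∈ Φp) :
    cs.length (w * r.reflection) < cs.length w := by
  obtain ⟨ω, hω, rfl⟩ := cs.exists_isReduced w
  exact hω.eq ▸ h.length_wordProd_mul_reflection_lt ω r hneg

theorem length_lt_length_mul_reflection (h : IsPositiveSystem cs σ Φp α αv) {w : W}
    (r : PositiveReflection σ Φp) (hpos : σ w r.root ∈ Φp) :
    cs.length w < cs.length (w * r.reflection) := by
  have hsq : r.reflection * r.reflection = 1 := by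
    refine h.faithful (LinearEquiv.ext fun v => ?_)
    rw [map_mul, LinearEquiv.mul_apply, r.apply_reflection v, map_sub, map_smul, r.apply_root,
      r.apply_reflection v]
    simp
  have hlt := h.length_mul_reflection_lt (w := w * r.reflection) r
    (by rwa [map_mul, LinearEquiv.mul_apply, r.apply_root, map_neg, neg_neg])
  rwa [mul_assoc, hsq, mul_one] at hlt

theorem inv_apply_simple_mem (h : IsPositiveSystem cs σ Φp α αv) {y : W} {i : Fin n}
    (hy : ¬cs.IsLeftDescent y i) : σ y⁻¹ (α i) ∈ Φp := by
  refine (h.apply_mem_or_neg_apply_mem y⁻¹ (h.simple_mem i)).resolve_right fun hneg => hy ?_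
  have hone : σ (1 : W)⁻¹ (α i) ∈ Φp := by simpa using h.simple_mem i
  have hlt := h.length_mul_reflection_lt (w := y⁻¹) (h.conjSimple hone) (by simpa using hneg)
  rw [← cs.isRightDescent_inv_iff, CoxeterSystem.IsRightDescent]
  simpa using hlt

theorem leftInversions_one (h : IsPositiveSystem cs σ Φp α αv) : leftInversions σ Φp 1 = ∅ :=
  Finset.filter_false_of_mem fun b hb => by simpa using h.neg_notMem b hb

theorem simple_notMem_image_leftInversions (h : IsPositiveSystem cs σ Φp α αv) (y : W)
    (i : Fin n) : α i ∉ (leftInversions σ Φp y).image (σ (cs.simple i)) := by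
  simp only [Finset.mem_image, leftInversions, Finset.mem_filter, not_exists, not_and]
  rintro b ⟨hb, -⟩ hbi
  rw [← h.simple_apply_simple_apply i b, hbi, h.simple_apply_root] at hb
  exact h.neg_notMem _ (h.simple_mem i) hb

theorem leftInversions_simple_mul (h : IsPositiveSystem cs σ Φp α αv) {y : W} {i : Fin n}
    (hpos : σ y⁻¹ (α i) ∈ Φp) :
    leftInversions σ Φp (cs.simple i * y) =
      insert (α i) ((leftInversions σ Φp y).image (σ (cs.simple i))) := by
  have hmul (b : V) : σ (cs.simple i * y)⁻¹ b = σ y⁻¹ (σ (cs.simple i) b) := by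
    rw [mul_inv_rev, cs.inv_simple, map_mul, LinearEquiv.mul_apply]
  ext b
  simp only [leftInversions, Finset.mem_filter, Finset.mem_insert, Finset.mem_image, hmul]
  constructor
  · rintro ⟨hb, hneg⟩
    exact or_iff_not_imp_left.mpr fun hbi =>
      ⟨_, ⟨h.simple_apply_mem i b hb hbi, hneg⟩, h.simple_apply_simple_apply i b⟩
  · rintro (rfl | ⟨c, ⟨hc, hneg⟩, rfl⟩)
    · exact ⟨h.simple_mem i, by simpa [h.simple_apply_root] using hpos⟩
    · have hci : c ≠ α i := by
        rintro rfl
        exact h.neg_notMem _ hpos hneg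
      exact ⟨h.simple_apply_mem i c hc hci, by rwa [h.simple_apply_simple_apply]⟩

end IsPositiveSystem

/-! ### Weight vectors -/

section WeightVector

variable {A : Type*} [CommRing A] [Algebra ℝ A]

/-- The off-diagonal part, at the coordinate `w`, of the action of `x : V` on the principal series
of the graded Hecke algebra, in the standard basis indexed by `W`. The sum runs over the positive
reflections `t` such that `w * t` is above `w` in the Bruhat order. -/
def ascentSum (σ : W →* (V ≃ₗ[ℝ] V)) (Φp : Finset V) [Fintype (PositiveReflection σ Φp)]
    (x : V) (w : W) : (W → A) →ₗ[A] A :=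
  ∑ r : PositiveReflection σ Φp with σ w r.root ∈ Φp,
    r.coroot x • LinearMap.proj (w * r.reflection)

theorem ascentSum_apply (σ : W →* (V ≃ₗ[ℝ] V)) (Φp : Finset V)
    [Fintype (PositiveReflection σ Φp)] (x : V) (w : W) (F : W → A) :
    ascentSum σ Φp x w F =
      ∑ r : PositiveReflection σ Φp with σ w r.root ∈ Φp, r.coroot x • F (w * r.reflection) := by
  simp [ascentSum]

/-- The function `F` on `W` is a simultaneous eigenvector of `V` in the principal series of the
graded Hecke algebra with parameter `hbar`, the eigenvalue of `x` being `ι (σ y x)`. -/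
def IsWeightVector (σ : W →* (V ≃ₗ[ℝ] V)) (Φp : Finset V) [Fintype (PositiveReflection σ Φp)]
    (ι : V →ₗ[ℝ] A) (hbar : A) (y : W) (F : W → A) : Prop :=
  ∀ w x, ι (σ w x) * F w - hbar * ascentSum σ Φp x w F = ι (σ y x) * F w

theorem IsWeightVector.sub {σ : W →* (V ≃ₗ[ℝ] V)} {Φp : Finset V}
    [Fintype (PositiveReflection σ Φp)] {ι : V →ₗ[ℝ] A} {hbar : A} {y : W} {F G : W → A}
    (hF : IsWeightVector σ Φp ι hbar y F) (hG : IsWeightVector σ Φp ι hbar y G) :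
    IsWeightVector σ Φp ι hbar y (F - G) := fun w x => by
  rw [map_sub, Pi.sub_apply]
  linear_combination hF w x - hG w x

namespace IsPositiveSystem

variable {cs} {σ : W →* (V ≃ₗ[ℝ] V)} {Φp : Finset V} {α : Fin n → V} {αv : Fin n → (V →ₗ[ℝ] ℝ)}
  [Fintype (PositiveReflection σ Φp)]

theorem ascentSum_comp_simple_mul_of_mem (h : IsPositiveSystem cs σ Φp α αv) {w : W} {i : Fin n}
    (hpos : σ w⁻¹ (α i) ∈ Φp) (x : V) (F : W → A) :
    ascentSum σ Φp x w (fun v => F (cs.simple i * v)) =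
      ascentSum σ Φp x (cs.simple i * w) F + αv i (σ w x) • F w := by
  rw [ascentSum_apply, ascentSum_apply, h.filter_apply_root_mem_eq_insert hpos,
    Finset.sum_insert (h.conjSimple_notMem_filter hpos), add_comm]
  simp [mul_assoc]

theorem ascentSum_comp_simple_mul (h : IsPositiveSystem cs σ Φp α αv) (w : W) (i : Fin n) (x : V)
    (F : W → A) :
    ascentSum σ Φp x w (fun v => F (cs.simple i * v)) =
      ascentSum σ Φp x (cs.simple i * w) F + αv i (σ w x) • F w := by
  rcases h.apply_mem_or_neg_apply_mem w⁻¹ (h.simple_mem i) with hpos | hneg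
  · exact h.ascentSum_comp_simple_mul_of_mem hpos x F
  · have hpos : σ (cs.simple i * w)⁻¹ (α i) ∈ Φp := by simpa [h.simple_apply_root] using hneg
    have key := h.ascentSum_comp_simple_mul_of_mem hpos x fun v => F (cs.simple i * v)
    simp only [cs.simple_mul_simple_cancel_left, map_mul, LinearEquiv.mul_apply,
      h.coroot_simple_apply, neg_smul] at key
    rw [key]
    abel

theorem isWeightVector_one (h : IsPositiveSystem cs σ Φp α αv) (ι : V →ₗ[ℝ] A) (hbar : A) :
    IsWeightVector σ Φp ι hbar 1 fun w => if w = 1 then 1 else 0 := by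
  intro w x
  have hascent : ascentSum σ Φp x w (fun v => if v = 1 then (1 : A) else 0) = 0 := by
    rw [ascentSum_apply]
    refine Finset.sum_eq_zero fun r hr => ?_
    have hne : w * r.reflection ≠ 1 := fun hone => by
      simpa [hone] using h.length_lt_length_mul_reflection r (Finset.mem_filter.mp hr).2
    rw [if_neg hne, smul_zero]
  rw [hascent]
  by_cases hw : w = 1 <;> simp [hw]

/-- Left multiplication by `hbar + ι (α i) • s_i`, with `s_i` also acting on the coefficients. -/
theorem isWeightVector_simple_mul (h : IsPositiveSystem cs σ Φp α αv) (i : Fin n)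
    {ι : V →ₗ[ℝ] A} {hbar : A} {y : W} {F : W → A}
    (hF : IsWeightVector σ Φp (ι ∘ₗ (σ (cs.simple i)).toLinearMap) hbar y F) :
    IsWeightVector σ Φp ι hbar (cs.simple i * y)
      (hbar • F + ι (α i) • fun w => F (cs.simple i * w)) := by
  intro w x
  have hw := hF w x
  have hsw := hF (cs.simple i * w) x
  simp only [LinearMap.comp_apply, LinearEquiv.coe_coe, map_mul, LinearEquiv.mul_apply,
    h.simple_apply_simple_apply] at hw hsw ⊢
  rw [h.apply_simple i (σ w x), map_sub, map_smul] at hw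
  rw [map_add, map_smul, map_smul, h.ascentSum_comp_simple_mul]
  simp only [Pi.add_apply, Pi.smul_apply, smul_eq_mul, Algebra.smul_def (R := ℝ)] at hw ⊢
  linear_combination hbar * hw + ι (α i) * hsw

theorem isWeightVector_billeyHbarSum (h : IsPositiveSystem cs σ Φp α αv) (ι : V →ₗ[ℝ] A)
    (hbar : A) (ω : List (Fin n)) :
    IsWeightVector σ Φp ι hbar (cs.wordProd ω) (billeyHbarSum cs σ α A ι hbar ω) := by
  induction ω generalizing ι with
  | nil =>
    rw [cs.wordProd_nil, funext (billeyHbarSum_nil cs σ α ι hbar)]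
    exact h.isWeightVector_one ι hbar
  | cons i ω ih =>
    rw [cs.wordProd_cons, funext (billeyHbarSum_cons cs σ α ι hbar i ω)]
    exact h.isWeightVector_simple_mul i (ih _)

/-- The eigenvector equations are triangular with respect to the length. -/
theorem eq_zero_of_isWeightVector [NoZeroDivisors A] (h : IsPositiveSystem cs σ Φp α αv)
    {ι : V →ₗ[ℝ] A} (hι : Function.Injective ι) {hbar : A} {y : W} {F : W → A} {N : ℕ}
    (hF : IsWeightVector σ Φp ι hbar y F) (hy : F y = 0) (hN : ∀ w, N < cs.length w → F w = 0) :
    F = 0 := by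
  have hdescend (k : ℕ) : ∀ w, N < cs.length w + k → F w = 0 := by
    induction k with
    | zero => exact hN
    | succ k ih =>
      intro w hw
      have hascent (x : V) : ascentSum σ Φp x w F = 0 := by
        rw [ascentSum_apply]
        refine Finset.sum_eq_zero fun r hr => ?_
        have hlt := h.length_lt_length_mul_reflection r (Finset.mem_filter.mp hr).2
        rw [ih _ (by omega), smul_zero]
      by_contra hne
      have hwy : w = y := h.faithful <| LinearEquiv.ext fun x => hι <| mul_right_cancel₀ hne <| by
        simpa [hascent] using hF w x
      exact hne (hwy ▸ hy)
  exact funext fun w => hdescend (N + 1) w (by omega)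

end IsPositiveSystem

end WeightVector

/-! ### Independence of the reduced word -/

theorem symmetricAlgebra_ι_injective (R : Type*) [CommRing R] (E : Type*) [AddCommGroup E]
    [Module R E] [Module.Free R E] : Function.Injective (SymmetricAlgebra.ι R E) := by
  let b := Module.Free.chooseBasis R E
  have hconstr : b.constr R MvPolynomial.X =
      (SymmetricAlgebra.equivMvPolynomial b).toLinearMap ∘ₗ SymmetricAlgebra.ι R E :=
    b.constr_eq R fun i => (SymmetricAlgebra.equivMvPolynomial_ι_apply b i).symm
  have hinj : Function.Injective (b.constr R (MvPolynomial.X (R := R))) :=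
    b.injective_constr_of_linearIndependent (MvPolynomial.linearIndependent_X _ R)
  rw [hconstr] at hinj
  exact Function.Injective.of_comp (f := SymmetricAlgebra.equivMvPolynomial b) hinj

namespace IsPositiveSystem

variable {cs} {σ : W →* (V ≃ₗ[ℝ] V)} {Φp : Finset V} {α : Fin n → V} {αv : Fin n → (V →ₗ[ℝ] ℝ)}
  {A : Type*} [CommRing A] [Algebra ℝ A]

theorem billeyHbarSum_wordProd (h : IsPositiveSystem cs σ Φp α αv) (ι : V →ₗ[ℝ] A)
    (hbar : A) {ω : List (Fin n)} (hω : cs.IsReduced ω) :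
    billeyHbarSum cs σ α A ι hbar ω (cs.wordProd ω) =
      ∏ b ∈ leftInversions σ Φp (cs.wordProd ω), ι b := by
  induction ω generalizing ι with
  | nil => simp [billeyHbarSum_nil, h.leftInversions_one]
  | cons i ω ih =>
    have hω' : cs.IsReduced ω := hω.drop 1
    have hlength : cs.length (cs.simple i * cs.wordProd ω) = ω.length + 1 := by
      rw [← cs.wordProd_cons, hω.eq, List.length_cons]
    have hpos : σ (cs.wordProd ω)⁻¹ (α i) ∈ Φp := h.inv_apply_simple_mem <| by
      rw [cs.not_isLeftDescent_iff, hlength, hω'.eq]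
    rw [billeyHbarSum_cons, cs.wordProd_cons, cs.simple_mul_simple_cancel_left, ih _ hω',
      billeyHbarSum_eq_zero_of_length_lt (hw := by omega), h.leftInversions_simple_mul hpos,
      Finset.prod_insert (h.simple_notMem_image_leftInversions _ i),
      Finset.prod_image (σ (cs.simple i)).injective.injOn, mul_zero, zero_add]
    rfl

theorem billeyHbarSum_eq_of_injective (h : IsPositiveSystem cs σ Φp α αv)
    [NoZeroDivisors A] {ι : V →ₗ[ℝ] A} (hι : Function.Injective ι) (hbar : A) {ω ω' : List (Fin n)}
    (hω : cs.IsReduced ω) (hω' : cs.IsReduced ω') (heq : cs.wordProd ω = cs.wordProd ω') :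
    billeyHbarSum cs σ α A ι hbar ω = billeyHbarSum cs σ α A ι hbar ω' := by
  have := h.finite_positiveReflection
  have := Fintype.ofFinite (PositiveReflection σ Φp)
  have hlength : ω.length = ω'.length := by rw [← hω.eq, heq, hω'.eq]
  refine sub_eq_zero.mp <| h.eq_zero_of_isWeightVector hι (N := ω.length)
    ((h.isWeightVector_billeyHbarSum ι hbar ω).sub
      (heq ▸ h.isWeightVector_billeyHbarSum ι hbar ω')) ?_ fun w hw => ?_
  · rw [Pi.sub_apply, h.billeyHbarSum_wordProd ι hbar hω, heq,
      h.billeyHbarSum_wordProd ι hbar hω', sub_self]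
  · rw [Pi.sub_apply, billeyHbarSum_eq_zero_of_length_lt (hw := hw),
      billeyHbarSum_eq_zero_of_length_lt (hw := hlength ▸ hw), sub_self]

end IsPositiveSystem

theorem billeyHbarSum_independent_of_reduced_word_general
    {σ : W →* (V ≃ₗ[ℝ] V)} {Φp : Finset V} {α : Fin n → V} {αv : Fin n → (V →ₗ[ℝ] ℝ)}
    (h : IsPositiveSystem cs σ Φp α αv) {A : Type*} [CommRing A] [Algebra ℝ A]
    (ι : V →ₗ[ℝ] A) (hbar : A) {ω ω' : List (Fin n)} (hω : cs.IsReduced ω)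
    (hω' : cs.IsReduced ω') (heq : cs.wordProd ω = cs.wordProd ω') (w : W) :
    billeyHbarSum cs σ α A ι hbar ω w = billeyHbarSum cs σ α A ι hbar ω' w := by
  let ι₀ : V →ₗ[ℝ] Polynomial (SymmetricAlgebra ℝ V) :=
    Polynomial.CAlgHom.toLinearMap ∘ₗ SymmetricAlgebra.ι ℝ V
  let φ : Polynomial (SymmetricAlgebra ℝ V) →ₐ[ℝ] A :=
    Polynomial.aevalTower (SymmetricAlgebra.lift ι) hbar
  have hι₀ : Function.Injective ι₀ :=
    Polynomial.C_injective.comp (symmetricAlgebra_ι_injective ℝ V)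
  have hφι : φ.toLinearMap ∘ₗ ι₀ = ι := by
    ext v
    simp [φ, ι₀]
  have hφ : φ Polynomial.X = hbar := by simp [φ]
  rw [← hφι, ← hφ, ← map_billeyHbarSum, ← map_billeyHbarSum,
    h.billeyHbarSum_eq_of_injective hι₀ Polynomial.X hω hω' heq]

theorem billeyHbarSum_independent_of_reduced_word
    -- the reflection representation of W on V, faithful (W is the Weyl group of Φ)
    (σ : W →* (V ≃ₗ[ℝ] V)) (hfaith : Function.Injective σ)
    -- positive roots, simple roots, simple coroots
    (Φp : Finset V) (α : Fin n → V) (αv : Fin n → (V →ₗ[ℝ] ℝ))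
    (hαmem : ∀ i, α i ∈ Φp)
    -- the roots span V
    (hspan : Submodule.span ℝ (Φp : Set V) = ⊤)
    -- reflection formula s_i(v) = v − ⟨v, α_i^∨⟩ α_i, with ⟨α_i, α_i^∨⟩ = 2
    (hrefl : ∀ (i : Fin n) (v : V), σ (cs.simple i) v = v - αv i v • α i)
    (hpairself : ∀ i, αv i (α i) = 2)
    -- crystallographic condition
    (hcrys : ∀ i j, ∃ m : ℤ, αv i (α j) = (m : ℝ))
    -- s_i permutes the positive roots other than α_i
    (hperm : ∀ i, ∀ b ∈ Φp, b ≠ α i → σ (cs.simple i) b ∈ Φp)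
    -- Φ⁺ and −Φ⁺ are disjoint, and the root system is reduced
    (hdisj : ∀ b ∈ Φp, -b ∉ Φp)
    (hreduced : ∀ b ∈ Φp, b + b ∉ Φp)
    -- the target algebra: Sym(V)[ħ] via its universal property
    (A : Type*) [CommRing A] [Algebra ℝ A] (ι : V →ₗ[ℝ] A) (hbar : A)
    -- two reduced expressions of y
    (y : W) (ω ω' : List (Fin n))
    (hω : cs.wordProd ω = y) (hωred : ω.length = cs.length y)
    (hω' : cs.wordProd ω' = y) (hω'red : ω'.length = cs.length y)
    (w : W) :
    billeyHbarSum cs σ α A ι hbar ω w = billeyHbarSum cs σ α A ι hbar ω' w :=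
  billeyHbarSum_independent_of_reduced_word_general cs
    ⟨hfaith, hαmem, hspan, hrefl, hpairself, hperm, hdisj⟩ ι hbar
    ((congrArg cs.length hω).trans hωred.symm)
    ((congrArg cs.length hω').trans hω'red.symm) (hω.trans hω'.symm) w
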